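/- Let G = A *_C B be an amalgamated free product of groups of type VFP with C of type VFP, and suppose G is of type VFP. Then χ(G) = χ(A) + χ(B) − χ(C). -/

import Mathlib

open CategoryTheory

noncomputable def trivialZMod (G : Type) [Group G] : ModuleCat (MonoidAlgebra ℤ G) :=
  (Rep.equivalenceModuleMonoidAlgebra.functor.obj (Rep.trivial ℤ G ℤ))

def TypeFP (G : Type) [Group G] : Prop :=
  ∃ (P : ProjectiveResolution (trivialZMod G)) (n : ℕ),
    (∀ i, Module.Finite (MonoidAlgebra ℤ G) (P.complex.X i)) ∧
    ∀ i, n < i → Subsingleton (P.complex.X i)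

def TypeVFP (G : Type) [Group G] : Prop :=
  ∃ K : Subgroup G, K.index ≠ 0 ∧ TypeFP K

/-- `HasFreeResOfRanks G n r`: the trivial `ℤG`-module `ℤ` admits a free resolution of
length `≤ n` in which the `i`-th module is free of finite rank `r i`. -/
def HasFreeResOfRanks (G : Type) [Group G] (n : ℕ) (r : ℕ → ℕ) : Prop :=
  ∃ P : ProjectiveResolution (trivialZMod G),
    (∀ i, Nonempty ((P.complex.X i) ≃ₗ[MonoidAlgebra ℤ G]
      (Fin (r i) →₀ MonoidAlgebra ℤ G))) ∧
    ∀ i, n < i → r i = 0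

/-- `EulerCharRel G q` asserts that the Euler characteristic of the type-`VFP` group `G`
(in the sense of Brown) equals the rational number `q`: some finite-index subgroup `K`
has a finite free resolution of the trivial module, and `q` is the alternating sum of
the ranks divided by the index `[G : K]`. -/
def EulerCharRel (G : Type) [Group G] (q : ℚ) : Prop :=
  ∃ (K : Subgroup G) (n : ℕ) (r : ℕ → ℕ), K.index ≠ 0 ∧
    HasFreeResOfRanks K n r ∧
    q = (∑ i ∈ Finset.range (n + 1), (-1 : ℚ) ^ i * r i) / K.index


/-- `G`, together with `iA`, `iB`, is the amalgamated free product `A *_C B` along the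
injections `f : C → A` and `g : C → B` (i.e. the pushout of groups). -/
def IsAmalgamatedProduct {C A B G : Type} [Group C] [Group A] [Group B] [Group G]
    (f : C →* A) (g : C →* B) (iA : A →* G) (iB : B →* G) : Prop :=
  iA.comp f = iB.comp g ∧
  ∀ (K : Type) (_ : Group K) (kA : A →* K) (kB : B →* K),
    kA.comp f = kB.comp g → ∃! k : G →* K, k.comp iA = kA ∧ k.comp iB = kB

/-!
Over `ℚ[G]` a finite resolution of `ℚ` by finitely generated projective modules has an alternating
sum of ranks even when `G` has torsion, once the rank of a projective module is measured by
Kaplansky's trace, the coefficient of the identity. By Schanuel's lemma this alternating sum depends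
only on the module resolved, and by the horseshoe lemma it is additive on short exact sequences. It
is unchanged by induction from a subgroup and multiplied by the index under restriction to one; as
`ℚ` is a retract of `ℚ[G/K]` when `[G : K]` is finite, Brown's `χ(G)` is therefore the alternating
sum for the trivial `ℚ[G]`-module. Applied to the chain complex of the Bass–Serre tree,
`0 → ℚ[G/C] → ℚ[G/A] ⊕ ℚ[G/B] → ℚ → 0`, additivity gives `χ(A) + χ(B) = χ(C) + χ(G)`.

Exactness comes from the universal property of the amalgam, without normal forms. In the cokernel of
the edge map the class of `(A, 0)` is fixed by `A` and by `B`, hence by `G`, so the cokernel is `ℚ`.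
To see that the edge map is injective, let `n ∈ ℚ[G/C]` be the base coset and bend the diagonal
action on `ℚ[G/C] ⊕ ℚ` by a shear that commutes with `C`: the result contains elements fixed by `A`
and by `B` whose difference is `n`, so they define a map out of `ℚ[G/A] ⊕ ℚ[G/B]` whose composite
with the edge map is the inclusion of `ℚ[G/C]`.
-/

section EulerTheory

universe u v w

variable {R : Type u} [Ring R] {T : Type w} [AddCommGroup T] {τ : R →+ T}
variable {M N P Q X : Type v} [AddCommGroup M] [Module R M] [AddCommGroup N] [Module R N]
  [AddCommGroup P] [Module R P] [AddCommGroup Q] [Module R Q] [AddCommGroup X] [Module R X]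

/-- `P` is a finitely generated projective `R`-module, witnessed by a finite dual basis, and `q`
is its Hattori–Stallings rank evaluated under `τ`, which should vanish on commutators. -/
def HasTraceRank (τ : R →+ T) (P : Type v) [AddCommGroup P] [Module R P] (q : T) : Prop :=
  ∃ (ι : Type) (_ : Fintype ι) (x : ι → P) (f : ι → P →ₗ[R] R),
    (∀ v, ∑ i, f i v • x i = v) ∧ q = ∑ i, τ (f i (x i))

/-- `M` has a resolution of length at most `n` by finitely generated projective modules, and `q`
is the alternating sum of the ranks of its terms. The recursion peels off the term in degree `0`
and passes to its syzygy. -/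
def HasEulerChar (τ : R →+ T) :
    ℕ → ∀ (M : Type v) [AddCommGroup M] [Module R M], T → Prop
  | 0, M, _, _, q => HasTraceRank τ M q
  | n + 1, M, _, _, q => ∃ (P : Type v) (_ : AddCommGroup P) (_ : Module R P) (p : P →ₗ[R] M)
      (r s : T), Function.Surjective p ∧ HasTraceRank τ P r ∧
        HasEulerChar τ n (LinearMap.ker p) s ∧ q = r - s

namespace HasTraceRank

theorem unique (hτ : ∀ x y, τ (x * y) = τ (y * x)) {q q' : T} (h : HasTraceRank τ P q)
    (h' : HasTraceRank τ P q') : q = q' := by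
  obtain ⟨ι, _, x, f, hf, rfl⟩ := h
  obtain ⟨κ, _, y, g, hg, rfl⟩ := h'
  calc ∑ i, τ (f i (x i)) = ∑ i, ∑ j, τ (g j (x i) * f i (y j)) := by
        refine Finset.sum_congr rfl fun i _ => ?_
        conv_lhs => rw [← hg (x i)]
        simp only [map_sum, map_smul, smul_eq_mul]
    _ = ∑ j, ∑ i, τ (f i (y j) * g j (x i)) := by
        rw [Finset.sum_comm]
        simp only [hτ]
    _ = ∑ j, τ (g j (y j)) := by
        refine Finset.sum_congr rfl fun j _ => ?_
        conv_rhs => rw [← hf (y j)]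
        simp only [map_sum, map_smul, smul_eq_mul]

theorem of_dualBasis {ι : Type*} [Fintype ι] (x : ι → P) (f : ι → P →ₗ[R] R)
    (hf : ∀ v, ∑ i, f i v • x i = v) : HasTraceRank τ P (∑ i, τ (f i (x i))) := by
  let e := (Fintype.equivFin ι).symm
  refine ⟨Fin (Fintype.card ι), inferInstance, x ∘ e, fun i => f (e i), fun v => ?_,
    (e.sum_comp fun i => τ (f i (x i))).symm⟩
  exact (e.sum_comp fun i => f i v • x i).trans (hf v)

theorem of_retract {q : T} (h : HasTraceRank τ P q) (i : M →ₗ[R] P) (p : P →ₗ[R] M)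
    (hpi : p ∘ₗ i = LinearMap.id) : ∃ q', HasTraceRank τ M q' := by
  obtain ⟨ι, _, x, f, hf, rfl⟩ := h
  refine ⟨_, ι, ‹_›, fun j => p (x j), fun j => f j ∘ₗ i, fun v => ?_, rfl⟩
  simpa using congrArg p (hf (i v)) |>.trans (LinearMap.congr_fun hpi v)

theorem of_linearEquiv {q : T} (h : HasTraceRank τ P q) (e : P ≃ₗ[R] Q) :
    HasTraceRank τ Q q := by
  obtain ⟨ι, _, x, f, hf, rfl⟩ := h
  refine ⟨ι, ‹_›, fun i => e (x i), fun i => f i ∘ₗ e.symm.toLinearMap, fun v => ?_, by simp⟩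
  simpa using congrArg e (hf (e.symm v))

theorem prod {q q' : T} (h : HasTraceRank τ P q) (h' : HasTraceRank τ Q q') :
    HasTraceRank τ (P × Q) (q + q') := by
  obtain ⟨ι, _, x, f, hf, rfl⟩ := h
  obtain ⟨κ, _, y, g, hg, rfl⟩ := h'
  refine ⟨ι ⊕ κ, inferInstance, Sum.elim (fun i => (x i, 0)) (fun j => (0, y j)),
    Sum.elim (fun i => f i ∘ₗ LinearMap.fst R P Q) (fun j => g j ∘ₗ LinearMap.snd R P Q),
    fun v => ?_, by simp⟩
  ext
  · simp [Fintype.sum_sum_type, Prod.fst_sum, hf]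
  · simp [Fintype.sum_sum_type, Prod.snd_sum, hg]

theorem of_subsingleton [Subsingleton P] : HasTraceRank τ P 0 :=
  ⟨Empty, inferInstance, Empty.elim, fun _ => 0, fun _ => Subsingleton.elim _ _, by simp⟩

theorem free (n : ℕ) : HasTraceRank τ (Fin n →₀ R) (n • τ 1) := by
  refine ⟨Fin n, inferInstance, fun i => Finsupp.single i 1, fun i => Finsupp.lapply i,
    fun v => ?_, by simp⟩
  ext j
  simp

theorem projective {q : T} (h : HasTraceRank τ P q) : Module.Projective R P := by
  obtain ⟨ι, _, x, f, hf, rfl⟩ := h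
  refine .of_split (LinearMap.pi f) (Fintype.linearCombination R x) (LinearMap.ext fun v => ?_)
  simpa [Fintype.linearCombination_apply] using hf v

end HasTraceRank

theorem nonempty_schanuelEquiv [Module.Projective R P] [Module.Projective R Q]
    (p : P →ₗ[R] M) (p' : Q →ₗ[R] M) (hp : Function.Surjective p) (hp' : Function.Surjective p') :
    Nonempty ((LinearMap.ker p × Q) ≃ₗ[R] (LinearMap.ker p' × P)) := by
  obtain ⟨a, ha⟩ := Module.projective_lifting_property p' p hp'
  obtain ⟨b, hb⟩ := Module.projective_lifting_property p p' hp
  have ha' : ∀ u, p' (a u) = p u := LinearMap.congr_fun ha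
  have hb' : ∀ u, p (b u) = p' u := LinearMap.congr_fun hb
  let u : (LinearMap.ker p × Q) →ₗ[R] P := (LinearMap.ker p).subtype.coprod b
  let v : (LinearMap.ker p' × P) →ₗ[R] Q := (LinearMap.ker p').subtype.coprod a
  have hu : ∀ w, (LinearMap.snd R (LinearMap.ker p) Q - a ∘ₗ u) w ∈ LinearMap.ker p' :=
    fun ⟨⟨x, hx⟩, w⟩ => by simp [u, ha', hb', LinearMap.mem_ker.mp hx]
  have hv : ∀ w, (LinearMap.snd R (LinearMap.ker p') P - b ∘ₗ v) w ∈ LinearMap.ker p :=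
    fun ⟨⟨x, hx⟩, w⟩ => by simp [v, ha', hb', LinearMap.mem_ker.mp hx]
  refine ⟨.ofLinearMap ((LinearMap.codRestrict _ _ hu).prod u)
    ((LinearMap.codRestrict _ _ hv).prod v) ?_ ?_⟩ <;>
  · refine LinearMap.ext fun ⟨⟨x, hx⟩, w⟩ => ?_
    ext <;> simp [u, v]

section Horseshoe

variable {i : N →ₗ[R] X} {p : X →ₗ[R] M} {π : P →ₗ[R] N} {π' : Q →ₗ[R] M} {σ : Q →ₗ[R] X}

theorem horseshoe_surjective (hip : Function.Exact i p) (hπ : Function.Surjective π)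
    (hπ' : Function.Surjective π') (hσ : p ∘ₗ σ = π') :
    Function.Surjective ((i ∘ₗ π).coprod σ) := fun x => by
  obtain ⟨v, hv⟩ := hπ' (p x)
  have hpσ : p (σ v) = p x := by rw [← hv, ← hσ, LinearMap.comp_apply]
  obtain ⟨a, ha⟩ := (hip (x - σ v)).mp (by simp [hpσ])
  obtain ⟨u, rfl⟩ := hπ a
  exact ⟨(u, v), by simp [ha]⟩

theorem exists_horseshoe_ker_exact (hi : Function.Injective i) (hip : Function.Exact i p)
    (hπ : Function.Surjective π) (hσ : p ∘ₗ σ = π') :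
    ∃ (j : LinearMap.ker π →ₗ[R] LinearMap.ker ((i ∘ₗ π).coprod σ))
      (t : LinearMap.ker ((i ∘ₗ π).coprod σ) →ₗ[R] LinearMap.ker π'),
      Function.Injective j ∧ Function.Exact j t ∧ Function.Surjective t := by
  have hσ' : ∀ v, p (σ v) = π' v := LinearMap.congr_fun hσ
  refine ⟨(LinearMap.inl R P Q).restrict fun u hu => ?_,
    (LinearMap.snd R P Q).restrict fun w hw => ?_, ?_, ?_, ?_⟩
  · simp_all
  · have : i (π w.1) + σ w.2 = 0 := hw
    simpa [hσ', hip.apply_apply_eq_zero] using congrArg p this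
  · exact fun u v h => Subtype.ext (LinearMap.inl_injective (congrArg Subtype.val h))
  · rintro ⟨⟨u, v⟩, hw⟩
    have hw' : i (π u) + σ v = 0 := hw
    constructor
    · intro h
      obtain rfl : v = 0 := congrArg Subtype.val h
      exact ⟨⟨u, hi (by simpa using hw')⟩, rfl⟩
    · rintro ⟨u', h⟩
      exact Subtype.ext (congrArg (fun w => w.1.2) h).symm
  · rintro ⟨v, hv⟩
    obtain ⟨a, ha⟩ := (hip (σ v)).mp (by rw [hσ', LinearMap.mem_ker.mp hv])
    obtain ⟨u, rfl⟩ := hπ a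
    exact ⟨⟨(-u, v), by simp [ha]⟩, rfl⟩

end Horseshoe

namespace HasEulerChar

theorem of_linearEquiv {n : ℕ} {q : T} (h : HasEulerChar τ n M q) (e : M ≃ₗ[R] N) :
    HasEulerChar τ n N q := by
  cases n with
  | zero => exact HasTraceRank.of_linearEquiv h e
  | succ n =>
    obtain ⟨P, _, _, p, r, s, hp, hP, hk, rfl⟩ := h
    refine ⟨P, _, _, e.toLinearMap ∘ₗ p, r, s, e.surjective.comp hp, hP, ?_, rfl⟩
    rwa [LinearEquiv.ker_comp]

theorem of_exact {n : ℕ} {r s : T} (hN : HasEulerChar τ n N s) (hP : HasTraceRank τ P r)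
    (i : N →ₗ[R] P) (p : P →ₗ[R] M) (hi : Function.Injective i) (hip : Function.Exact i p)
    (hp : Function.Surjective p) : HasEulerChar τ (n + 1) M (r - s) :=
  ⟨P, _, _, p, r, s, hp, hP, hN.of_linearEquiv <| (LinearEquiv.ofInjective i hi).trans <|
    LinearEquiv.ofEq _ _ (LinearMap.exact_iff.mp hip).symm, rfl⟩

theorem succ {n : ℕ} {q : T} (h : HasEulerChar τ n M q) : HasEulerChar τ (n + 1) M q := by
  induction n generalizing M q with
  | zero =>
    have : HasEulerChar τ 0 PUnit.{v + 1} 0 := HasTraceRank.of_subsingleton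
    simpa using this.of_exact h (0 : PUnit.{v + 1} →ₗ[R] M) .id
      (Function.injective_of_subsingleton _) ((LinearMap.exact_zero_iff_injective _ _).mpr
        Function.injective_id) Function.surjective_id
  | succ n ih =>
    obtain ⟨P, _, _, p, r, s, hp, hP, hk, rfl⟩ := h
    exact ⟨P, _, _, p, r, s, hp, hP, ih hk, rfl⟩

theorem mono {n m : ℕ} (hnm : n ≤ m) {q : T} (h : HasEulerChar τ n M q) :
    HasEulerChar τ m M q := by
  induction hnm with
  | refl => exact h
  | step _ ih => exact ih.succ

theorem of_hasTraceRank {q : T} (h : HasTraceRank τ M q) (n : ℕ) : HasEulerChar τ n M q :=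
  mono (n := 0) (Nat.zero_le n) h

theorem extension {n : ℕ} {q q' : T} (hN : HasEulerChar τ n N q) (hM : HasEulerChar τ n M q')
    (i : N →ₗ[R] X) (p : X →ₗ[R] M) (hi : Function.Injective i) (hip : Function.Exact i p)
    (hp : Function.Surjective p) : HasEulerChar τ n X (q + q') := by
  induction n generalizing N M X q q' with
  | zero =>
    have := HasTraceRank.projective hM
    obtain ⟨s, hs⟩ := Module.projective_lifting_property p .id hp
    exact (HasTraceRank.prod hN hM).of_linearEquiv (hip.splitSurjectiveEquiv hi ⟨s, hs⟩).1.symm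
  | succ n ih =>
    obtain ⟨P, _, _, π, r, s, hπ, hP, hk, rfl⟩ := hN
    obtain ⟨P', _, _, π', r', s', hπ', hP', hk', rfl⟩ := hM
    have := hP'.projective
    obtain ⟨σ, hσ⟩ := Module.projective_lifting_property p π' hp
    obtain ⟨j, t, hj, hjt, ht⟩ := exists_horseshoe_ker_exact hi hip hπ hσ
    exact ⟨P × P', _, _, (i ∘ₗ π).coprod σ, r + r', s + s', horseshoe_surjective hip hπ hπ' hσ,
      hP.prod hP', ih hk hk' j t hj hjt ht, by abel⟩

theorem prod {n : ℕ} {q q' : T} (hM : HasEulerChar τ n M q) (hN : HasEulerChar τ n N q') :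
    HasEulerChar τ n (M × N) (q + q') :=
  hM.extension hN (LinearMap.inl R M N) (LinearMap.snd R M N) LinearMap.inl_injective
    Function.Exact.inl_snd LinearMap.snd_surjective

theorem unique (hτ : ∀ x y, τ (x * y) = τ (y * x)) {n m : ℕ} {q q' : T}
    (h : HasEulerChar τ n M q) (h' : HasEulerChar τ m M q') : q = q' := by
  wlog hnm : n = m generalizing n m
  · exact this (h.mono (le_max_left n m)) (h'.mono (le_max_right n m)) rfl
  subst hnm
  induction n generalizing M q q' with
  | zero => exact HasTraceRank.unique hτ h h'
  | succ n ih =>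
    obtain ⟨P, _, _, p, r, s, hp, hP, hk, rfl⟩ := h
    obtain ⟨P', _, _, p', r', s', hp', hP', hk', rfl⟩ := h'
    have := hP.projective
    have := hP'.projective
    obtain ⟨e⟩ := nonempty_schanuelEquiv p p' hp hp'
    have hrs : s + r' = s' + r := ih ((hk.prod (of_hasTraceRank hP' n)).of_linearEquiv e)
      (hk'.prod (of_hasTraceRank hP n))
    rw [sub_eq_sub_iff_add_eq_add, add_comm r, add_comm r', hrs]

theorem exists_of_prod {n : ℕ} {q : T} (h : HasEulerChar τ n (N × M) q) :
    ∃ q', HasEulerChar τ n M q' := by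
  induction n generalizing M N q with
  | zero =>
    exact HasTraceRank.of_retract (P := N × M) h (LinearMap.inr R N M) (LinearMap.snd R N M)
      (LinearMap.snd_comp_inr R N M)
  | succ n ih =>
    obtain ⟨P, _, _, π, r, s, hπ, hP, hk, rfl⟩ := h
    let α := LinearMap.fst R N M ∘ₗ π
    let β := LinearMap.snd R N M ∘ₗ π
    have hα : Function.Surjective α := Prod.fst_surjective.comp hπ
    have hβ : Function.Surjective β := Prod.snd_surjective.comp hπ
    have := hP.projective
    obtain ⟨e⟩ := nonempty_schanuelEquiv π (α.prodMap β) hπ (hα.prodMap hβ)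
    let e' : (LinearMap.ker α × LinearMap.ker β) ≃ₗ[R] LinearMap.ker (α.prodMap β) :=
      (LinearEquiv.ofInjective ((LinearMap.ker α).subtype.prodMap (LinearMap.ker β).subtype)
        (Subtype.val_injective.prodMap Subtype.val_injective)).trans
        (.ofEq _ _ (by simp [LinearMap.range_prodMap, LinearMap.ker_prodMap]))
    have hker : HasEulerChar τ n ((P × LinearMap.ker α) × LinearMap.ker β) _ :=
      (hk.prod (of_hasTraceRank (hP.prod hP) n)).of_linearEquiv <| e.trans <|
        (LinearEquiv.prodComm R _ P).trans <| ((LinearEquiv.refl R P).prodCongr e'.symm).trans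
        (LinearEquiv.prodAssoc R P _ _).symm
    obtain ⟨q', hq'⟩ := ih hker
    exact ⟨r - q', P, _, _, β, r, q', hβ, hP, hq', rfl⟩

theorem exists_of_retract {n : ℕ} {q : T} (h : HasEulerChar τ n X q) (i : M →ₗ[R] X)
    (p : X →ₗ[R] M) (hpi : p ∘ₗ i = LinearMap.id) : ∃ q', HasEulerChar τ n M q' :=
  exists_of_prod (N := LinearMap.ker p) <| h.of_linearEquiv
    (p.exact_subtype_ker_map.splitSurjectiveEquiv (LinearMap.ker p).injective_subtype ⟨i, hpi⟩).1

theorem of_complex (n : ℕ) (Y : ℕ → Type v) [∀ k, AddCommGroup (Y k)] [∀ k, Module R (Y k)]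
    (d : ∀ k, Y (k + 1) →ₗ[R] Y k) (ε : Y 0 →ₗ[R] M) (hε : Function.Surjective ε)
    (h0 : Function.Exact (d 0) ε) (hd : ∀ k, Function.Exact (d (k + 1)) (d k)) (r : ℕ → T)
    (hr : ∀ k, HasTraceRank τ (Y k) (r k)) (hn : Subsingleton (Y (n + 1))) :
    HasEulerChar τ n M (∑ k ∈ Finset.range (n + 1), (-1 : ℤ) ^ k • r k) := by
  induction n generalizing M Y r with
  | zero =>
    have hinj : Function.Injective ε := by
      rw [← LinearMap.ker_eq_bot, LinearMap.exact_iff.mp h0, LinearMap.range_eq_bot]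
      exact Subsingleton.elim _ _
    simpa [HasEulerChar] using (hr 0).of_linearEquiv (.ofBijective ε ⟨hinj, hε⟩)
  | succ n ih =>
    have hker : HasEulerChar τ n (LinearMap.ker ε) _ := ih (fun k => Y (k + 1))
      (fun k => d (k + 1)) ((d 0).codRestrict _ h0.apply_apply_eq_zero)
      (fun ⟨y, hy⟩ => ((h0 y).mp hy).imp fun _ => Subtype.ext)
      (fun y => Subtype.ext_iff.trans (hd 0 y)) (fun k => hd (k + 1)) (fun k => r (k + 1))
      (fun k => hr (k + 1)) hn
    refine ⟨Y 0, _, _, ε, _, _, hε, hr 0, hker, ?_⟩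
    simp only [Finset.sum_range_succ' _ (n + 1), pow_succ, mul_neg, mul_one, neg_smul,
      Finset.sum_neg_distrib, pow_zero, one_smul]
    abel

end HasEulerChar

end EulerTheory

section ChangeOfRings

universe u u' v v' v'' w w'

open TensorProduct

variable {R : Type u} {S : Type u'} [Ring R] [Ring S] (φ : S →+* R)
variable {M : Type v} {N : Type v'} [AddCommGroup M] [AddCommGroup N]
variable {A : Type w} [AddCommGroup A]

/-- The relations `φ s ⊗ m = 1 ⊗ s • m` imposed on `R ⊗[ℤ] M` to form `R ⊗[S] M`. -/
def baseChangeRelations (M : Type v) [AddCommGroup M] [Module S M] : Submodule R (R ⊗[ℤ] M) :=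
  Submodule.span R (Set.range fun x : S × M => φ x.1 ⊗ₜ x.2 - 1 ⊗ₜ (x.1 • x.2))

/-- The extension of scalars `R ⊗[S] M` of a left module along a homomorphism of noncommutative
rings, presented as a quotient of `R ⊗[ℤ] M`. -/
abbrev BaseChange (M : Type v) [AddCommGroup M] [Module S M] : Type max u v :=
  (R ⊗[ℤ] M) ⧸ baseChangeRelations φ M

namespace BaseChange

section Lift

variable [Module S M]

/-- The canonical map `m ↦ 1 ⊗ m`. -/
def mk : M →ₛₗ[φ] BaseChange φ M where
  toFun m := (baseChangeRelations φ M).mkQ (1 ⊗ₜ m)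
  map_add' m n := by rw [tmul_add, map_add]
  map_smul' s m := by
    rw [← map_smul, smul_tmul', smul_eq_mul, mul_one, eq_comm, ← sub_eq_zero, ← map_sub,
      Submodule.mkQ_apply, Submodule.Quotient.mk_eq_zero]
    exact Submodule.subset_span ⟨(s, m), rfl⟩

variable {φ}

theorem smul_mk (r : R) (m : M) : r • mk φ m = (baseChangeRelations φ M).mkQ (r ⊗ₜ m) := by
  simp [mk, ← Submodule.Quotient.mk_smul, smul_tmul']

@[elab_as_elim]
theorem induction {p : BaseChange φ M → Prop} (smul_mk : ∀ (r : R) (m : M), p (r • mk φ m))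
    (add : ∀ x y, p x → p y → p (x + y)) (x : BaseChange φ M) : p x := by
  obtain ⟨t, rfl⟩ := (baseChangeRelations φ M).mkQ_surjective x
  induction t using TensorProduct.induction_on with
  | zero => simpa using smul_mk 0 0
  | tmul r m => exact BaseChange.smul_mk (φ := φ) r m ▸ smul_mk r m
  | add x y hx hy => simpa using add _ _ hx hy

/-- The additive map `r ⊗ m ↦ f r m` on a base change defined by a balanced biadditive map. -/
def liftAddHom (f : R →+ M →+ A) (hf : ∀ r s m, f (r * φ s) m = f r (s • m)) :
    BaseChange φ M →+ A :=
  QuotientAddGroup.lift (baseChangeRelations φ M).toAddSubgroup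
    (TensorProduct.liftAddHom f fun n r m => by rw [map_zsmul, map_zsmul]; rfl) fun t ht => by
      suffices ∀ r : R, TensorProduct.liftAddHom f _ (r • t) = 0 by simpa using this 1
      induction ht using Submodule.span_induction with
      | mem t ht =>
        obtain ⟨⟨s, m⟩, rfl⟩ := ht
        intro r
        simp [smul_sub, smul_tmul', hf]
      | zero => simp
      | add t t' _ _ h h' => simp [h, h']
      | smul a t _ h => exact fun r => by rw [← mul_smul, h]

@[simp]
theorem liftAddHom_smul_mk (f : R →+ M →+ A) (hf : ∀ r s m, f (r * φ s) m = f r (s • m))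
    (r : R) (m : M) : liftAddHom f hf (r • mk φ m) = f r m := by
  rw [smul_mk]
  rfl

variable [Module R N]

theorem hom_ext {f g : BaseChange φ M →ₗ[R] N} (h : ∀ m, f (mk φ m) = g (mk φ m)) : f = g :=
  LinearMap.ext fun x => by
    induction x using induction with
    | smul_mk r m => rw [map_smul, map_smul, h]
    | add x y hx hy => rw [map_add, map_add, hx, hy]

/-- The linear map on a base change induced by a semilinear map. -/
def lift (f : M →ₛₗ[φ] N) : BaseChange φ M →ₗ[R] N :=
  (baseChangeRelations φ M).liftQ
    (AlgebraTensorModule.lift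
      (LinearMap.toSpanSingleton R (M →ₗ[ℤ] N) f.toAddMonoidHom.toIntLinearMap)) <| by
    rw [baseChangeRelations, Submodule.span_le]
    rintro _ ⟨⟨s, m⟩, rfl⟩
    simp

@[simp]
theorem lift_mk (f : M →ₛₗ[φ] N) (m : M) : lift f (mk φ m) = f m := by
  simp [lift, mk]

end Lift

section Map

variable {L : Type v''} {φ} [Module S M] [Module S N] [AddCommGroup L] [Module S L]

variable (φ) in
/-- Functoriality of base change. -/
def map (f : M →ₗ[S] N) : BaseChange φ M →ₗ[R] BaseChange φ N :=
  lift ((mk φ).comp f)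

@[simp]
theorem map_mk (f : M →ₗ[S] N) (m : M) : map φ f (mk φ m) = mk φ (f m) :=
  lift_mk _ m

theorem map_surjective {f : M →ₗ[S] N} (hf : Function.Surjective f) :
    Function.Surjective (map φ f) := by
  rw [← LinearMap.range_eq_top, eq_top_iff]
  rintro x -
  induction x using induction with
  | smul_mk r n =>
    obtain ⟨m, rfl⟩ := hf n
    exact ⟨r • mk φ m, by simp⟩
  | add x y hx hy => exact add_mem hx hy

theorem map_exact {f : M →ₗ[S] N} {g : N →ₗ[S] L} (hfg : Function.Exact f g)
    (hg : Function.Surjective g) : Function.Exact (map φ f) (map φ g) := by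
  have hgf : map φ g ∘ₗ map φ f = 0 := hom_ext fun m => by simp [hfg.apply_apply_eq_zero]
  rw [LinearMap.exact_iff]
  refine le_antisymm (fun x hx => ?_) (LinearMap.range_le_ker_iff.mpr hgf)
  let q : N →ₛₗ[φ] (BaseChange φ N ⧸ LinearMap.range (map φ f)) :=
    (LinearMap.range (map φ f)).mkQ.comp (mk φ)
  have hq : LinearMap.ker g ≤ LinearMap.ker q := by
    rw [LinearMap.exact_iff.mp hfg]
    rintro _ ⟨m, rfl⟩
    exact (Submodule.Quotient.mk_eq_zero _).mpr ⟨mk φ m, map_mk f m⟩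
  let t : BaseChange φ L →ₗ[R] (BaseChange φ N ⧸ LinearMap.range (map φ f)) :=
    lift (((LinearMap.ker g).liftQ q hq).comp (g.quotKerEquivOfSurjective hg).symm.toLinearMap)
  have ht : t ∘ₗ map φ g = (LinearMap.range (map φ f)).mkQ := hom_ext fun n => by
    have : (g.quotKerEquivOfSurjective hg).symm (g n) = (LinearMap.ker g).mkQ n := by
      rw [LinearEquiv.symm_apply_eq]; rfl
    simp [t, this, q]
  rw [← (LinearMap.range (map φ f)).ker_mkQ, ← ht, LinearMap.mem_ker, LinearMap.comp_apply,
    LinearMap.mem_ker.mp hx, map_zero]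

end Map

end BaseChange

/-- `R` is flat as a right `S`-module via `φ`: extension of scalars preserves injectivity. -/
def RightFlat (φ : S →+* R) : Prop :=
  ∀ ⦃M N : Type v⦄ [AddCommGroup M] [Module S M] [AddCommGroup N] [Module S N] (f : M →ₗ[S] N),
    Function.Injective f → Function.Injective (BaseChange.map φ f)

variable {φ} in
/-- If `R` has coordinates `π i` over `S` with respect to elements `y i`, compatible with right
multiplication by `S`, then each element of `R ⊗[S] M` is recovered from its coordinates in `M`. -/
theorem rightFlat_of_coordinates {ι : Type w} (π : ι → R →+ S) (y : ι → R)
    (hπ : ∀ i r s, π i (r * φ s) = π i r * s)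
    (hy : ∀ r, ∀ᶠ t : Finset ι in Filter.atTop, ∑ i ∈ t, y i * φ (π i r) = r) :
    RightFlat.{u, u', v} φ := by
  intro M N _ _ _ _ f hf
  let coord (L : Type v) [AddCommGroup L] [Module S L] (i : ι) : BaseChange φ L →+ L :=
    BaseChange.liftAddHom ((smulAddHom S L).comp (π i)) fun r s m => by simp [hπ, mul_smul]
  have coord_smul_mk (L : Type v) [AddCommGroup L] [Module S L] (i : ι) (r : R) (m : L) :
      coord L i (r • .mk φ m) = π i r • m := BaseChange.liftAddHom_smul_mk _ _ r m
  have coord_map (i : ι) (x : BaseChange φ M) :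
      coord N i (BaseChange.map φ f x) = f (coord M i x) := by
    induction x using BaseChange.induction with
    | smul_mk r m => simp [coord_smul_mk]
    | add x x' hx hx' => simp only [map_add, hx, hx']
  have reconstruct (x : BaseChange φ M) : ∀ᶠ t : Finset ι in Filter.atTop,
      ∑ i ∈ t, y i • BaseChange.mk φ (coord M i x) = x := by
    induction x using BaseChange.induction with
    | smul_mk r m =>
      filter_upwards [hy r] with t ht
      conv_rhs => rw [← ht, Finset.sum_smul]
      simp [coord_smul_mk, mul_smul]
    | add x x' hx hx' =>
      filter_upwards [hx, hx'] with t ht ht'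
      conv_rhs => rw [← ht, ← ht', ← Finset.sum_add_distrib]
      simp
  rw [injective_iff_map_eq_zero]
  intro x hx
  have hcoord (i : ι) : coord M i x = 0 := hf (by rw [← coord_map, hx, map_zero, map_zero])
  obtain ⟨t, ht⟩ := (reconstruct x).exists
  simpa [hcoord] using ht.symm

section Trace

variable {φ} [Module S M] {T : Type w} {T' : Type w'} [AddCommGroup T] [AddCommGroup T']
  {τ : S →+ T} {τ' : R →+ T'} {c : T →+ T'} {q : T}

theorem HasTraceRank.baseChange (hc : ∀ s, τ' (φ s) = c (τ s)) (h : HasTraceRank τ M q) :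
    HasTraceRank τ' (BaseChange φ M) (c q) := by
  obtain ⟨ι, _, x, f, hf, rfl⟩ := h
  refine ⟨ι, ‹_›, fun i => .mk φ (x i), fun i => BaseChange.lift (φ.toSemilinearMap.comp (f i)), ?_,
    by simp [hc]⟩
  intro v
  induction v using BaseChange.induction with
  | smul_mk r m =>
    conv_rhs => rw [← hf m]
    simp [mul_smul, Finset.smul_sum]
  | add v w hv hw => simp only [map_add, add_smul, Finset.sum_add_distrib, hv, hw]

theorem HasEulerChar.baseChange (hφ : RightFlat.{u, u', v} φ) (hc : ∀ s, τ' (φ s) = c (τ s))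
    {n : ℕ} (h : HasEulerChar τ n M q) : HasEulerChar τ' n (BaseChange φ M) (c q) := by
  induction n generalizing M q with
  | zero => exact HasTraceRank.baseChange hc h
  | succ n ih =>
    obtain ⟨P, _, _, p, r, s, hp, hP, hk, rfl⟩ := h
    rw [map_sub]
    exact (ih hk).of_exact (hP.baseChange hc) _ _ (hφ _ (LinearMap.ker p).injective_subtype)
      (BaseChange.map_exact p.exact_subtype_ker_map hp) (BaseChange.map_surjective hp)

end Trace

end ChangeOfRings

section RestrictionOfScalars

universe u u' v v' w w'

variable {R : Type u} {S : Type u'} [Ring R] [Ring S] {φ : S →+* R}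

/-- The `R`-module `M` regarded as an `S`-module along `φ : S →+* R`. -/
def Restriction (_φ : S →+* R) (M : Type v) : Type v := M

namespace Restriction

variable {M : Type v} {N : Type v'} [AddCommGroup M] [AddCommGroup N]

instance : AddCommGroup (Restriction φ M) := inferInstanceAs (AddCommGroup M)

instance [Module R M] : Module S (Restriction φ M) := Module.compHom M φ

variable [Module R M]

/-- Functoriality of restriction. -/
def map [Module R N] (φ : S →+* R) (f : M →ₗ[R] N) : Restriction φ M →ₗ[S] Restriction φ N where
  __ := f.toAddMonoidHom
  map_smul' s m := f.map_smul (φ s) m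

/-- A bijective `φ`-semilinear map is an isomorphism onto the restriction of its target. -/
noncomputable def equivOfBijective [Module S N] (f : N →ₛₗ[φ] M) (hf : Function.Bijective f) :
    N ≃ₗ[S] Restriction φ M where
  __ := Equiv.ofBijective f hf
  map_add' := map_add f
  map_smul' := map_smulₛₗ f

end Restriction

section Trace

variable {M : Type v} [AddCommGroup M] [Module R M]
variable {T : Type w} {T' : Type w'} [AddCommGroup T] [AddCommGroup T']
  {τ : R →+ T} {τ' : S →+ T'} {c : T →+ T'} {q : T}
  {ι : Type*} [Fintype ι] {g : ι → Restriction φ R →ₗ[S] S} {y : ι → R}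

theorem HasTraceRank.restriction (hg : ∀ x : R, ∑ i, φ (g i x) * y i = x)
    (hc : ∀ x : R, ∑ i, τ' (g i (y i * x : R)) = c (τ x)) (h : HasTraceRank τ M q) :
    HasTraceRank τ' (Restriction φ M) (c q) := by
  obtain ⟨κ, _, x, f, hf, rfl⟩ := h
  have hbasis (v : M) : ∑ j : κ × ι, φ (g j.2 (f j.1 v)) • y j.2 • x j.1 = v := by
    simp only [Fintype.sum_prod_type, ← mul_smul, ← Finset.sum_smul, hg]
    exact hf v
  have htrace : ∑ j : κ × ι, τ' (g j.2 (f j.1 (y j.2 • x j.1))) = c (∑ k, τ (f k (x k))) := by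
    simp only [map_sum, Fintype.sum_prod_type, map_smul, smul_eq_mul, hc]
  rw [← htrace]
  exact HasTraceRank.of_dualBasis (P := Restriction φ M) (fun j : κ × ι => y j.2 • x j.1)
    (fun j => g j.2 ∘ₗ Restriction.map φ (f j.1)) hbasis

theorem HasEulerChar.restriction (hg : ∀ x : R, ∑ i, φ (g i x) * y i = x)
    (hc : ∀ x : R, ∑ i, τ' (g i (y i * x : R)) = c (τ x)) {n : ℕ} (h : HasEulerChar τ n M q) :
    HasEulerChar τ' n (Restriction φ M) (c q) := by
  induction n generalizing M q with
  | zero => exact HasTraceRank.restriction hg hc h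
  | succ n ih =>
    obtain ⟨P, _, _, p, r, s, hp, hP, hk, rfl⟩ := h
    rw [map_sub]
    exact (ih hk).of_exact (hP.restriction hg hc)
      (Restriction.map φ (LinearMap.ker p).subtype) (Restriction.map φ p)
      (LinearMap.ker p).injective_subtype p.exact_subtype_ker_map hp

end Trace

end RestrictionOfScalars

section GroupAlgebra

universe u u' v w

open MonoidAlgebra

variable {k : Type u} [CommRing k] {G H : Type v} [Group G] [Group H]

/-- Kaplansky's trace on a group algebra: the coefficient of the identity. -/
noncomputable def kaplanskyTrace (k : Type u) [CommRing k] (G : Type v) [Group G] :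
    MonoidAlgebra k G →+ k :=
  (Finsupp.applyAddHom 1).comp coeffAddEquiv.toAddMonoidHom

theorem kaplanskyTrace_apply (x : MonoidAlgebra k G) : kaplanskyTrace k G x = x.coeff 1 := rfl

theorem kaplanskyTrace_mul_comm (x y : MonoidAlgebra k G) :
    kaplanskyTrace k G (x * y) = kaplanskyTrace k G (y * x) := by
  classical
  induction x using MonoidAlgebra.induction_linear with
  | zero => simp
  | add x x' hx hx' => simp [add_mul, mul_add, hx, hx']
  | single g a =>
    induction y using MonoidAlgebra.induction_linear with
    | zero => simp
    | add x x' hx hx' => simp [add_mul, mul_add, hx, hx']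
    | single h b =>
      simp only [kaplanskyTrace_apply, single_mul_single, coeff_single, Finsupp.single_apply,
        mul_comm a b, mul_eq_one_comm (a := g)]

theorem kaplanskyTrace_one : kaplanskyTrace k G 1 = 1 := by
  simp [kaplanskyTrace_apply, one_def]

theorem kaplanskyTrace_mapRingHom {k' : Type u'} [CommRing k'] (σ : k →+* k')
    (x : MonoidAlgebra k G) :
    kaplanskyTrace k' G (mapRingHom G σ x) = σ (kaplanskyTrace k G x) := by
  simp [kaplanskyTrace_apply]

section Cosets

variable {j : H →* G} (hj : Function.Injective j)
include hj

theorem kaplanskyTrace_mapDomainRingHom (x : MonoidAlgebra k H) :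
    kaplanskyTrace k G (mapDomainRingHom k j x) = kaplanskyTrace k H x := by
  rw [kaplanskyTrace_apply, kaplanskyTrace_apply, ← map_one j]
  exact Finsupp.mapDomain_apply hj x.coeff 1

theorem kaplanskyTrace_comapDomain (x : MonoidAlgebra k G) :
    kaplanskyTrace k H (comapDomain j hj x) = kaplanskyTrace k G x := by
  simp [kaplanskyTrace_apply]

theorem comapDomain_mul_mapDomain (x : MonoidAlgebra k G) (s : MonoidAlgebra k H) :
    comapDomain j hj (x * mapDomainRingHom k j s) = comapDomain j hj x * s := by
  induction s using MonoidAlgebra.induction_linear with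
  | zero => simp
  | add s s' hs hs' => rw [map_add, mul_add, comapDomain_add, hs, hs', mul_add]
  | single h b => ext h'; simp [mapDomain_single]

theorem comapDomain_mapDomain_mul (s : MonoidAlgebra k H) (x : MonoidAlgebra k G) :
    comapDomain j hj (mapDomainRingHom k j s * x) = s * comapDomain j hj x := by
  induction s using MonoidAlgebra.induction_linear with
  | zero => simp
  | add s s' hs hs' => rw [map_add, add_mul, comapDomain_add, hs, hs', add_mul]
  | single h b => ext h'; simp [mapDomain_single]

theorem mapDomain_comapDomain_single (g : G) (a : k) [Decidable (g ∈ j.range)] :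
    mapDomainRingHom k j (comapDomain j hj (single g a)) =
      if g ∈ j.range then single g a else 0 := by
  split_ifs with hg
  · obtain ⟨h, rfl⟩ := hg
    simp [mapDomain_single]
  · rw [comapDomain_single_of_not_mem_range hg, map_zero]

theorem single_out_mul_coordinate [DecidableEq (G ⧸ j.range)] (c : G ⧸ j.range) (g : G) (a : k) :
    single c.out 1 * mapDomainRingHom k j (comapDomain j hj (single c.out⁻¹ 1 * single g a)) =
      if c = g then single g a else 0 := by
  classical
  have : c.out⁻¹ * g ∈ j.range ↔ c = g := by
    rw [← QuotientGroup.eq, QuotientGroup.out_eq']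
  simp only [single_mul_single, one_mul, mapDomain_comapDomain_single hj, this, mul_ite, mul_zero,
    mul_inv_cancel_left]

theorem coordinate_mul_single_out_inv [DecidableEq (G ⧸ j.range)] (c : G ⧸ j.range) (g : G)
    (a : k) :
    mapDomainRingHom k j (comapDomain j hj (single g a * single c.out 1)) * single c.out⁻¹ 1 =
      if c = (g⁻¹ : G) then single g a else 0 := by
  classical
  have : g * c.out ∈ j.range ↔ c = (g⁻¹ : G) := by
    conv_rhs => rw [eq_comm, ← c.out_eq', QuotientGroup.eq, inv_inv]
  simp only [single_mul_single, mul_one, mapDomain_comapDomain_single hj, this, ite_mul, zero_mul,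
    mul_inv_cancel_right]

theorem rightFlat_mapDomainRingHom : RightFlat.{max u v, max u v, w} (mapDomainRingHom k j) := by
  classical
  refine rightFlat_of_coordinates (ι := G ⧸ j.range)
    (fun c => (comapDomainAddMonoidHom j hj).comp (AddMonoidHom.mulLeft (single c.out⁻¹ 1)))
    (fun c => single c.out 1) (fun c r s => ?_) fun r => ?_
  · simp only [AddMonoidHom.comp_apply, AddMonoidHom.coe_mulLeft, comapDomainAddMonoidHom_apply,
      ← mul_assoc, comapDomain_mul_mapDomain]
  · induction r using MonoidAlgebra.induction_linear with
    | zero => simp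
    | add r r' hr hr' =>
      filter_upwards [hr, hr'] with t ht ht'
      simp only [map_add, mul_add, Finset.sum_add_distrib, ht, ht']
    | single g a =>
      filter_upwards [Filter.eventually_ge_atTop {(g : G ⧸ j.range)}] with t ht
      simp only [AddMonoidHom.comp_apply, AddMonoidHom.coe_mulLeft, comapDomainAddMonoidHom_apply,
        single_out_mul_coordinate hj]
      simpa using fun h => (h (ht (Finset.mem_singleton_self _))).elim

theorem HasEulerChar.restriction_mapDomainRingHom [j.range.FiniteIndex] {M : Type w}
    [AddCommGroup M] [Module (MonoidAlgebra k G) M] {n : ℕ} {q : k}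
    (h : HasEulerChar (kaplanskyTrace k G) n M q) :
    HasEulerChar (kaplanskyTrace k H) n (Restriction (mapDomainRingHom k j) M)
      (j.range.index • q) := by
  classical
  have := Subgroup.fintypeOfIndexNeZero (Subgroup.FiniteIndex.index_ne_zero (H := j.range))
  let coord (c : G ⧸ j.range) :
      Restriction (mapDomainRingHom k j) (MonoidAlgebra k G) →ₗ[MonoidAlgebra k H]
        MonoidAlgebra k H :=
    { (comapDomainAddMonoidHom j hj).comp (AddMonoidHom.mulRight (single c.out 1)) with
      map_smul' s x := (congrArg _ (mul_assoc ..)).trans (comapDomain_mapDomain_mul hj s _) }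
  have hcoord (c : G ⧸ j.range) (x : MonoidAlgebra k G) :
      coord c x = comapDomain j hj (x * single c.out 1) := rfl
  refine HasEulerChar.restriction (φ := mapDomainRingHom k j) (g := coord)
    (y := fun c : G ⧸ j.range => single c.out⁻¹ 1) (c := nsmulAddMonoidHom j.range.index)
    (fun x => ?_) (fun x => ?_) h
  · simp only [hcoord]
    induction x using MonoidAlgebra.induction_linear with
    | zero => simp
    | add x x' hx hx' =>
      simp only [add_mul, comapDomain_add, map_add, Finset.sum_add_distrib, hx, hx']
    | single g a =>
      simp only [coordinate_mul_single_out_inv hj, Finset.sum_ite_eq', Finset.mem_univ, if_true]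
  · have htrace (c : G ⧸ j.range) :
        kaplanskyTrace k H (coord c (single c.out⁻¹ 1 * x : MonoidAlgebra k G)) =
          kaplanskyTrace k G x := by
      rw [hcoord, kaplanskyTrace_comapDomain, kaplanskyTrace_mul_comm, ← mul_assoc,
        single_mul_single, mul_inv_cancel, mul_one, ← one_def, one_mul]
    simp [htrace, Subgroup.index, Nat.card_eq_fintype_card]

end Cosets

end GroupAlgebra

section CoefficientExtension

universe u v w

open MonoidAlgebra TensorProduct

variable {k : Type u} [CommRing k] {G : Type v} [Group G]
variable {M N : Type w} [AddCommGroup M] [Module (MonoidAlgebra ℤ G) M] [AddCommGroup N]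
  [Module (MonoidAlgebra ℤ G) N]

/-- The additive comparison map `k[G] ⊗[ℤ[G]] M → k ⊗[ℤ] M`, sending `ag ⊗ m` to `a ⊗ gm`. -/
noncomputable def baseChangeToTensor (k : Type u) [CommRing k] (G : Type v) [Group G] (M : Type w)
    [AddCommGroup M] [Module (MonoidAlgebra ℤ G) M] :
    BaseChange (mapRingHom G (Int.castRingHom k)) M →+ k ⊗[ℤ] M :=
  BaseChange.liftAddHom
    ((Finsupp.liftAddHom fun g => AddMonoidHom.mk'
      (fun a => (TensorProduct.mk ℤ k M a).toAddMonoidHom.comp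
        (smulAddHom (MonoidAlgebra ℤ G) M (single g 1)))
      fun a b => by ext; simp).comp coeffAddEquiv.toAddMonoidHom) fun r s m => by
    induction r using MonoidAlgebra.induction_linear with
    | zero => simp
    | add r r' hr hr' => simp only [add_mul, map_add, AddMonoidHom.add_apply, hr, hr']
    | single g a =>
      induction s using MonoidAlgebra.induction_linear with
      | zero => simp
      | add s s' hs hs' => simp only [mul_add, map_add, AddMonoidHom.add_apply, add_smul, hs, hs']
      | single h z =>
        have hz : (single h z : MonoidAlgebra ℤ G) = z • single h 1 := by simp
        rw [hz, smul_assoc, map_zsmul, mul_smul_comm, map_zsmul, map_zsmul]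
        simp [single_mul_single, ← mul_smul]

@[simp]
theorem baseChangeToTensor_single_smul_mk (g : G) (a : k) (m : M) :
    baseChangeToTensor k G M (single g a • .mk _ m) = a ⊗ₜ (single g (1 : ℤ) • m) := by
  simp [baseChangeToTensor]

theorem baseChangeToTensor_injective : Function.Injective (baseChangeToTensor k G M) := by
  let θ : k ⊗[ℤ] M →+ BaseChange (mapRingHom G (Int.castRingHom k)) M :=
    TensorProduct.liftAddHom (AddMonoidHom.mk' (fun a => (smulAddHom (MonoidAlgebra k G) _
      (single 1 a)).comp (BaseChange.mk _).toAddMonoidHom) fun a b => by ext; simp)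
      fun z a m => by rw [map_zsmul, map_zsmul]; rfl
  refine Function.LeftInverse.injective (g := θ) fun x => ?_
  induction x using BaseChange.induction with
  | add x y hx hy => rw [map_add, map_add, hx, hy]
  | smul_mk r m =>
    induction r using MonoidAlgebra.induction_linear with
    | zero => simp
    | add r r' hr hr' => rw [add_smul, map_add, map_add, hr, hr']
    | single g a => simp [θ, ← mul_smul, single_mul_single]

theorem baseChangeToTensor_map (f : M →ₗ[MonoidAlgebra ℤ G] N)
    (x : BaseChange (mapRingHom G (Int.castRingHom k)) M) :
    baseChangeToTensor k G N (BaseChange.map _ f x) =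
      f.toAddMonoidHom.toIntLinearMap.lTensor k (baseChangeToTensor k G M x) := by
  induction x using BaseChange.induction with
  | add x y hx hy => simp only [map_add, hx, hy]
  | smul_mk r m =>
    rw [map_smul, BaseChange.map_mk]
    induction r using MonoidAlgebra.induction_linear with
    | zero => simp
    | add r r' hr hr' => simp only [add_smul, map_add, hr, hr']
    | single g a => simp

theorem rightFlat_mapRingHom [Module.Flat ℤ k] :
    RightFlat.{max u v, v, w} (mapRingHom G (Int.castRingHom k)) := by
  intro M N _ _ _ _ f hf
  refine .of_comp (f := baseChangeToTensor k G N) ?_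
  have := (Module.Flat.lTensor_preserves_injective_linearMap (M := k)
    f.toAddMonoidHom.toIntLinearMap hf).comp
    (baseChangeToTensor_injective (k := k) (G := G))
  convert this using 1
  exact funext (baseChangeToTensor_map f)

end CoefficientExtension

section TrivialModule

universe u u' v w

open MonoidAlgebra

/-- The trivial module `k` over the group algebra `k[G]`. -/
abbrev TrivialModule (k : Type u) [CommRing k] (G : Type v) [Group G] : Type u :=
  (Representation.trivial k G k).asModule

namespace TrivialModule

variable {k : Type u} [CommRing k] {G : Type v} [Group G]

/-- The tautological identification of the trivial module with its ring of coefficients. -/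
noncomputable def of : k ≃+ TrivialModule k G :=
  (Representation.trivial k G k).asModuleEquiv.symm.toAddEquiv

theorem single_smul_of (g : G) (a b : k) :
    single g a • (of b : TrivialModule k G) = of (a * b) := by
  rw [Representation.single_smul]
  rfl

variable {R : Type*} [Ring R] {φ : MonoidAlgebra k G →+* R} {N : Type w} [AddCommGroup N]
  [Module R N]

/-- The semilinear map on the trivial module determined by the image `n` of `1`, which can be any
element fixed by the group. -/
noncomputable def lift (n : N) (hn : ∀ g, φ (single g 1) • n = n) : TrivialModule k G →ₛₗ[φ] N where
  toFun m := φ (single 1 (of.symm m)) • n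
  map_add' m m' := by rw [map_add, single_add, map_add, add_smul]
  map_smul' x m := by
    obtain ⟨b, rfl⟩ := of.surjective m
    induction x using MonoidAlgebra.induction_linear with
    | zero => simp
    | add x y hx hy =>
      rw [add_smul, map_add, single_add, map_add, add_smul, hx, hy, map_add, add_smul]
    | single g a =>
      rw [single_smul_of, AddEquiv.symm_apply_apply, AddEquiv.symm_apply_apply, ← mul_smul,
        ← map_mul]
      conv_lhs => rw [← hn g, ← mul_smul, ← map_mul]
      simp [single_mul_single]

theorem lift_of (n : N) (hn : ∀ g, φ (single g 1) • n = n) (b : k) :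
    lift n hn (of b) = φ (single 1 b) • n := by
  simp [lift]

@[simp]
theorem lift_of_one (n : N) (hn : ∀ g, φ (single g 1) • n = n) : lift n hn (of 1) = n := by
  rw [lift_of, hn]

theorem hom_ext {f g : TrivialModule k G →ₛₗ[φ] N} (h : f (of 1) = g (of 1)) : f = g :=
  LinearMap.ext fun m => by
    obtain ⟨b, rfl⟩ := of.surjective m
    have hb : (of b : TrivialModule k G) = single (1 : G) b • of 1 := by
      rw [single_smul_of, mul_one]
    rw [hb, map_smulₛₗ, map_smulₛₗ, h]

theorem nonempty_baseChange_equiv {k' : Type u'} [CommRing k'] (σ : k →+* k') :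
    Nonempty (BaseChange (mapRingHom G σ) (TrivialModule k G) ≃ₗ[MonoidAlgebra k' G]
      TrivialModule k' G) := by
  let t : TrivialModule k G →ₛₗ[mapRingHom G σ] TrivialModule k' G :=
    lift (of 1) fun g => by rw [mapRingHom_single, map_one, single_smul_of, mul_one]
  let s : TrivialModule k' G →ₗ[MonoidAlgebra k' G]
      BaseChange (mapRingHom G σ) (TrivialModule k G) :=
    lift (BaseChange.mk _ (of 1)) fun g => by
      have hg : (single g 1 : MonoidAlgebra k' G) = mapRingHom G σ (single g 1) := by simp
      rw [RingHom.id_apply, hg, ← map_smulₛₗ, single_smul_of, mul_one]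
  have hst : s.comp t = BaseChange.mk _ := hom_ext (by simp [s, t])
  exact ⟨.ofLinearMap (BaseChange.lift t) s (hom_ext (by simp [s, t]))
    (BaseChange.hom_ext fun m => by simpa using LinearMap.congr_fun hst m)⟩

theorem nonempty_equiv_restriction {H : Type v} [Group H] (j : H →* G) :
    Nonempty (TrivialModule k H ≃ₗ[MonoidAlgebra k H]
      Restriction (mapDomainRingHom k j) (TrivialModule k G)) := by
  let t : TrivialModule k H →ₛₗ[mapDomainRingHom k j] TrivialModule k G :=
    lift (of 1) fun h => by
      rw [mapDomainRingHom_apply, mapDomain_single, single_smul_of, mul_one]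
  have ht : ⇑t = of ∘ of.symm := funext fun m => by
    obtain ⟨b, rfl⟩ := of.surjective m
    rw [lift_of, mapDomainRingHom_apply, mapDomain_single, single_smul_of, mul_one,
      Function.comp_apply, AddEquiv.symm_apply_apply]
  exact ⟨Restriction.equivOfBijective t (ht ▸ of.bijective.comp of.symm.bijective)⟩

end TrivialModule

end TrivialModule

section PermutationModule

universe u v w

open MonoidAlgebra

variable {k : Type u} [CommRing k] {G H : Type v} [Group G] [Group H] (j : H →* G)

/-- The permutation module `k[G/H]`, as the module induced from the trivial `k[H]`-module. -/
abbrev PermutationModule (k : Type u) [CommRing k] {G H : Type v} [Group G] [Group H]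
    (j : H →* G) : Type max u v :=
  BaseChange (mapDomainRingHom k j) (TrivialModule k H)

namespace PermutationModule

/-- The identity coset. -/
noncomputable def base (k : Type u) [CommRing k] {G H : Type v} [Group G] [Group H] (j : H →* G) :
    PermutationModule k j :=
  BaseChange.mk _ (.of 1)

variable {j}

theorem single_smul_base (h : H) : single (j h) (1 : k) • base k j = base k j := by
  have hh : (single (j h) 1 : MonoidAlgebra k G) = mapDomainRingHom k j (single h 1) := by simp
  rw [base, hh, ← map_smulₛₗ, TrivialModule.single_smul_of, mul_one]

section Lift

variable {N : Type w} [AddCommGroup N] [Module (MonoidAlgebra k G) N]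

/-- The universal property of `k[G/H]`: a map out of it amounts to an element fixed by `H`. -/
noncomputable def lift (n : N) (hn : ∀ h, single (j h) (1 : k) • n = n) :
    PermutationModule k j →ₗ[MonoidAlgebra k G] N :=
  BaseChange.lift (TrivialModule.lift n fun h => by
    rw [mapDomainRingHom_apply, mapDomain_single, hn])

@[simp]
theorem lift_base (n : N) (hn : ∀ h, single (j h) (1 : k) • n = n) :
    lift n hn (base k j) = n := by
  simp [lift, base]

theorem hom_ext {f g : PermutationModule k j →ₗ[MonoidAlgebra k G] N}
    (h : f (base k j) = g (base k j)) : f = g :=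
  BaseChange.hom_ext fun m => LinearMap.congr_fun
    (TrivialModule.hom_ext (f := f.comp (BaseChange.mk _)) (g := g.comp (BaseChange.mk _)) h) m

end Lift

/-- The augmentation of `k[G/H]`, sending every coset to `1`. -/
noncomputable def augmentation (k : Type u) [CommRing k] {G H : Type v} [Group G] [Group H]
    (j : H →* G) : PermutationModule k j →ₗ[MonoidAlgebra k G] TrivialModule k G :=
  lift (.of 1) fun h => by rw [TrivialModule.single_smul_of, mul_one]

@[simp]
theorem augmentation_base : augmentation k j (base k j) = .of 1 :=
  lift_base _ _

/-- The element of `k[G/H]` given by a coset. -/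
noncomputable def coset (k : Type u) [CommRing k] {G H : Type v} [Group G] [Group H] (j : H →* G)
    (c : G ⧸ j.range) : PermutationModule k j :=
  Quotient.liftOn' c (fun g => single g (1 : k) • base k j) fun g g' hg => by
    obtain ⟨h, hh⟩ := QuotientGroup.leftRel_apply.mp hg
    have : (single g' 1 : MonoidAlgebra k G) = single g 1 * single (j h) 1 := by
      rw [single_mul_single, hh, mul_inv_cancel_left, mul_one]
    simp only [this, mul_smul, single_smul_base]

theorem single_smul_coset (g : G) (c : G ⧸ j.range) :
    single g (1 : k) • coset k j c = coset k j (g • c) := by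
  induction c using Quotient.inductionOn'
  change single g (1 : k) • single _ (1 : k) • base k j = single _ (1 : k) • base k j
  rw [← mul_smul, single_mul_single, mul_one]
  rfl

theorem augmentation_coset (c : G ⧸ j.range) : augmentation k j (coset k j c) = .of 1 := by
  induction c using Quotient.inductionOn' with | h g =>
  change augmentation k j (single g (1 : k) • base k j) = .of 1
  rw [map_smul, augmentation_base, TrivialModule.single_smul_of, mul_one]

theorem exists_augmentation_section [j.range.FiniteIndex] (hu : IsUnit (j.range.index : k)) :
    ∃ i : TrivialModule k G →ₗ[MonoidAlgebra k G] PermutationModule k j,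
      augmentation k j ∘ₗ i = LinearMap.id := by
  have := Subgroup.fintypeOfIndexNeZero (Subgroup.FiniteIndex.index_ne_zero (H := j.range))
  obtain ⟨a, ha⟩ := hu.exists_left_inv
  let n := single (1 : G) a • ∑ c, coset k j c
  have hn (g : G) : single g (1 : k) • n = n := by
    have hperm : ∑ c, coset k j (g • c) = ∑ c, coset k j c :=
      Equiv.sum_comp (MulAction.toPerm g) (coset k j)
    have hcomm : (single g 1 : MonoidAlgebra k G) * single 1 a = single 1 a * single g 1 := by
      simp [single_mul_single]
    rw [← mul_smul, hcomm, mul_smul, Finset.smul_sum]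
    simp only [single_smul_coset, hperm, n]
  refine ⟨TrivialModule.lift n hn, TrivialModule.hom_ext ?_⟩
  have hone : (Fintype.card (G ⧸ j.range) • a : k) = 1 := by
    rw [← ha, nsmul_eq_mul, mul_comm, Subgroup.index, Nat.card_eq_fintype_card]
  rw [LinearMap.comp_apply, TrivialModule.lift_of_one, map_smul, map_sum]
  simp only [augmentation_coset, Finset.sum_const, Finset.card_univ, LinearMap.id_apply]
  rw [← map_nsmul, TrivialModule.single_smul_of, mul_smul_comm, mul_one, hone]

end PermutationModule

variable {j}

theorem HasEulerChar.permutationModule (hj : Function.Injective j) {n : ℕ} {q : k}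
    (h : HasEulerChar (kaplanskyTrace k H) n (TrivialModule k H) q) :
    HasEulerChar (kaplanskyTrace k G) n (PermutationModule k j) q :=
  h.baseChange (c := AddMonoidHom.id k) (rightFlat_mapDomainRingHom hj)
    (kaplanskyTrace_mapDomainRingHom hj)

theorem HasEulerChar.trivialModule_of_finiteIndex {k G H : Type u} [CommRing k] [Group G]
    [Group H] {j : H →* G} (hj : Function.Injective j)
    [j.range.FiniteIndex] (hu : IsUnit (j.range.index : k)) {n : ℕ} {q : k}
    (h : HasEulerChar (kaplanskyTrace k H) n (TrivialModule k H) q) :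
    ∃ q', HasEulerChar (kaplanskyTrace k G) n (TrivialModule k G) q' ∧ q = j.range.index • q' := by
  obtain ⟨i, hi⟩ := PermutationModule.exists_augmentation_section hu
  obtain ⟨q', hq'⟩ := (h.permutationModule hj).exists_of_retract i _ hi
  obtain ⟨e⟩ := TrivialModule.nonempty_equiv_restriction (k := k) j
  exact ⟨q', hq', (h.of_linearEquiv e).unique kaplanskyTrace_mul_comm
    (hq'.restriction_mapDomainRingHom hj)⟩

end PermutationModule

section EulerCharRel

open MonoidAlgebra

variable {G : Type} [Group G]

theorem HasFreeResOfRanks.hasEulerChar_int {n : ℕ} {r : ℕ → ℕ} (h : HasFreeResOfRanks G n r) :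
    HasEulerChar (kaplanskyTrace ℤ G) n (TrivialModule ℤ G)
      (∑ i ∈ Finset.range (n + 1), (-1) ^ i * (r i : ℤ)) := by
  obtain ⟨P, hP, hn⟩ := h
  let e : ((ChainComplex.single₀ _).obj (trivialZMod G)).X 0 ≃ₗ[MonoidAlgebra ℤ G]
      TrivialModule ℤ G :=
    (HomologicalComplex.singleObjXSelf (ComplexShape.down ℕ) 0 (trivialZMod G)).toLinearEquiv
  refine HasEulerChar.of_linearEquiv ?_ e
  have := HasEulerChar.of_complex (τ := kaplanskyTrace ℤ G) n (fun i => P.complex.X i)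
    (fun i => (P.complex.d (i + 1) i).hom) (P.π.f 0).hom
    ((ModuleCat.epi_iff_surjective (P.π.f 0)).mp inferInstance)
    ((ShortComplex.ShortExact.moduleCat_exact_iff_function_exact _).mp P.exact₀)
    (fun i => (ShortComplex.ShortExact.moduleCat_exact_iff_function_exact _).mp (P.exact_succ i))
    (fun i => r i • kaplanskyTrace ℤ G 1) (fun i => ?_) ?_
  · simpa [kaplanskyTrace_one] using this
  · obtain ⟨e⟩ := hP i
    exact (HasTraceRank.free (r i)).of_linearEquiv e.symm
  · obtain ⟨e⟩ := hP (n + 1)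
    rw [hn _ n.lt_succ_self] at e
    exact e.toEquiv.subsingleton

theorem HasFreeResOfRanks.hasEulerChar_rat {n : ℕ} {r : ℕ → ℕ} (h : HasFreeResOfRanks G n r) :
    HasEulerChar (kaplanskyTrace ℚ G) n (TrivialModule ℚ G)
      (∑ i ∈ Finset.range (n + 1), (-1) ^ i * (r i : ℚ)) := by
  obtain ⟨e⟩ := TrivialModule.nonempty_baseChange_equiv (G := G) (Int.castRingHom ℚ)
  simpa using (h.hasEulerChar_int.baseChange (c := Int.castAddHom ℚ) rightFlat_mapRingHom
    (kaplanskyTrace_mapRingHom _)).of_linearEquiv e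

theorem EulerCharRel.eventually_hasEulerChar {q : ℚ} (h : EulerCharRel G q) :
    ∀ᶠ n in Filter.atTop, HasEulerChar (kaplanskyTrace ℚ G) n (TrivialModule ℚ G) q := by
  obtain ⟨K, n, r, hK, hr, rfl⟩ := h
  have hK' : (K.index : ℚ) ≠ 0 := Nat.cast_ne_zero.mpr hK
  have : K.subtype.range.FiniteIndex := ⟨by rwa [K.range_subtype]⟩
  obtain ⟨q, hq, hqr⟩ := hr.hasEulerChar_rat.trivialModule_of_finiteIndex K.subtype_injective
    (by rw [K.range_subtype]; exact hK'.isUnit)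
  rw [hqr, K.range_subtype, nsmul_eq_mul, mul_div_cancel_left₀ _ hK']
  exact Filter.eventually_atTop.mpr ⟨n, fun m hm => hq.mono hm⟩

end EulerCharRel

namespace IsAmalgamatedProduct

open MonoidAlgebra

variable {C A B G : Type} [Group C] [Group A] [Group B] [Group G]
  {f : C →* A} {g : C →* B} {iA : A →* G} {iB : B →* G}

theorem apply_apply_eq (h : IsAmalgamatedProduct f g iA iB) (c : C) : iA (f c) = iB (g c) :=
  DFunLike.congr_fun h.1 c

/-- The vertex groups as a family indexed by `Bool`. -/
def VertexGroup (A B : Type) : Bool → Type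
  | true => A
  | false => B

instance : ∀ b, Group (VertexGroup A B b)
  | true => inferInstanceAs (Group A)
  | false => inferInstanceAs (Group B)

/-- The inclusions of the edge group into the vertex groups. -/
def edgeInclusion (f : C →* A) (g : C →* B) : ∀ b, C →* VertexGroup A B b
  | true => f
  | false => g

theorem injective (h : IsAmalgamatedProduct f g iA iB) (hf : Function.Injective f)
    (hg : Function.Injective g) : Function.Injective iA ∧ Function.Injective iB := by
  let φ := edgeInclusion f g
  have hφ : ∀ b, Function.Injective (φ b)
    | true => hf
    | false => hg
  let kA : A →* Monoid.PushoutI φ := Monoid.PushoutI.of (φ := φ) true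
  let kB : B →* Monoid.PushoutI φ := Monoid.PushoutI.of (φ := φ) false
  have hk : kA.comp f = kB.comp g :=
    (Monoid.PushoutI.of_comp_eq_base true).trans (Monoid.PushoutI.of_comp_eq_base false).symm
  obtain ⟨k, ⟨hA, hB⟩, -⟩ := h.2 (Monoid.PushoutI φ) inferInstance kA kB hk
  refine ⟨.of_comp (f := k) ?_, .of_comp (f := k) ?_⟩
  · rw [← MonoidHom.coe_comp, hA]
    exact Monoid.PushoutI.of_injective hφ true
  · rw [← MonoidHom.coe_comp, hB]
    exact Monoid.PushoutI.of_injective hφ false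

theorem induction (h : IsAmalgamatedProduct f g iA iB) {p : G → Prop} (left : ∀ a, p (iA a))
    (right : ∀ b, p (iB b)) (mul : ∀ x y, p x → p y → p (x * y)) (inv : ∀ x, p x → p x⁻¹)
    (x : G) : p x := by
  let S : Subgroup G :=
    { carrier := {x | p x}
      mul_mem' := mul _ _
      one_mem' := map_one iA ▸ left 1
      inv_mem' := inv _ }
  obtain ⟨k, ⟨hkA, hkB⟩, -⟩ := h.2 S inferInstance (iA.codRestrict S left)
    (iB.codRestrict S right) (MonoidHom.ext fun c => Subtype.ext (h.apply_apply_eq c))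
  have hk : S.subtype.comp k = MonoidHom.id G :=
    (h.2 G inferInstance iA iB h.1).unique
      ⟨by rw [MonoidHom.comp_assoc, hkA]; rfl, by rw [MonoidHom.comp_assoc, hkB]; rfl⟩ ⟨rfl, rfl⟩
  rw [← MonoidHom.id_apply G x, ← hk]
  exact (k x).2

/-- Bending a homomorphism: it can be conjugated on `B` alone by an element that commutes with the
image of `C`. -/
theorem exists_bending (h : IsAmalgamatedProduct f g iA iB) {K : Type} [Group K] (ρ : G →* K)
    (u : K) (hu : ∀ c, Commute u (ρ (iA (f c)))) :
    ∃ σ : G →* K, (∀ a, σ (iA a) = ρ (iA a)) ∧ ∀ b, σ (iB b) = u * ρ (iB b) * u⁻¹ := by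
  obtain ⟨σ, ⟨hA, hB⟩, -⟩ := h.2 K inferInstance (ρ.comp iA)
    ((MulAut.conj u).toMonoidHom.comp (ρ.comp iB)) (MonoidHom.ext fun c => by
      change ρ (iA (f c)) = u * ρ (iB (g c)) * u⁻¹
      rw [← h.apply_apply_eq, (hu c).eq, mul_inv_cancel_right])
  exact ⟨σ, DFunLike.congr_fun hA, DFunLike.congr_fun hB⟩

variable {k : Type} [CommRing k]

section Extension

variable {N : Type} [AddCommGroup N] [Module k N] [Module (MonoidAlgebra k G) N]
  [IsScalarTower k (MonoidAlgebra k G) N] {n : N}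

/-- Bend the diagonal representation on `N × k` by the shear `(v, q) ↦ (v + q n, q)`. -/
theorem exists_bent_representation (h : IsAmalgamatedProduct f g iA iB)
    (hn : ∀ c, single (iA (f c)) (1 : k) • n = n) :
    ∃ σ : Representation k G (N × k), (∀ x v, σ x (v, 0) = (single x (1 : k) • v, 0)) ∧
      (∀ a, σ (iA a) (0, 1) = (0, 1)) ∧ ∀ b, σ (iB b) (n, 1) = (n, 1) := by
  let ρ : G →* (Module.End k (N × k))ˣ :=
    ((Representation.ofModule' (k := k) (G := G) N).prod (Representation.trivial k G k)).toHomUnits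
  have hρ (x : G) (v : N × k) : (ρ x).1 v = (single x (1 : k) • v.1, v.2) := rfl
  let T : Module.End k (N × k) :=
    LinearMap.inl k N k ∘ₗ LinearMap.toSpanSingleton k N n ∘ₗ LinearMap.snd k N k
  have hT : T * T = 0 := LinearMap.ext fun v => by simp [T]
  let u : (Module.End k (N × k))ˣ :=
    ⟨1 + T, 1 - T, by simp [mul_sub, add_mul, hT], by simp [mul_add, sub_mul, hT]⟩
  have hu (v : N × k) : u.1 v = (v.1 + v.2 • n, v.2) :=
    Prod.ext (by simp [u, T]) (by simp [u, T])
  obtain ⟨σ, hσA, hσB⟩ := h.exists_bending ρ u fun c => by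
    refine Units.ext (LinearMap.ext fun v => ?_)
    change u.1 ((ρ _).1 v) = (ρ _).1 (u.1 v)
    rw [hρ, hρ, hu, hu, smul_add, IsScalarTower.to_smulCommClass'.smul_comm, hn]
  have hB (b : B) (v : N × k) : (σ (iB b)).1 (u.1 v) = u.1 ((ρ (iB b)).1 v) := by
    rw [← Module.End.mul_apply, ← Units.val_mul, hσB, inv_mul_cancel_right]
    rfl
  refine ⟨(Units.coeHom _).comp σ, h.induction (fun a v => ?_) (fun b v => ?_)
    (fun x y hx hy v => ?_) (fun x hx v => ?_), fun a => ?_, fun b => ?_⟩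
  · change (σ (iA a)).1 (v, 0) = _
    rw [hσA, hρ]
  · simpa [hu, hρ] using hB b (v, 0)
  · rw [map_mul, Module.End.mul_apply, hy, hx, ← mul_smul, single_mul_single, one_mul]
  · have hv : v = single x (1 : k) • single x⁻¹ (1 : k) • v := by
      rw [← mul_smul, single_mul_single, mul_inv_cancel, one_mul, ← one_def, one_smul]
    conv_lhs => rw [hv]
    rw [← hx, ← Module.End.mul_apply, ← map_mul, inv_mul_cancel, map_one, Module.End.one_apply]
  · change (σ (iA a)).1 (0, 1) = _
    rw [hσA, hρ, smul_zero]
  · simpa [hu, hρ] using hB b (0, 1)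

/-- In an extension of `k` by `N`, the element `n` is the difference between a lift of `1` fixed by
`A` and one fixed by `B`. -/
theorem exists_extension (h : IsAmalgamatedProduct f g iA iB)
    (hn : ∀ c, single (iA (f c)) (1 : k) • n = n) :
    ∃ (E : Type) (_ : AddCommGroup E) (_ : Module (MonoidAlgebra k G) E)
      (i : N →ₗ[MonoidAlgebra k G] E) (eA eB : E), Function.Injective i ∧ i n = eB - eA ∧
      (∀ a, single (iA a) (1 : k) • eA = eA) ∧ ∀ b, single (iB b) (1 : k) • eB = eB := by
  obtain ⟨σ, hN, hA, hB⟩ := h.exists_bent_representation hn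
  have hσ (x : G) (v : N × k) : single x (1 : k) • σ.asModuleEquiv.symm v =
      σ.asModuleEquiv.symm (σ x v) := by
    rw [Representation.single_smul, one_smul, LinearEquiv.apply_symm_apply]
    rfl
  refine ⟨σ.asModule, inferInstance, inferInstance,
    equivariantOfLinearOfComm (σ.asModuleEquiv.symm.toLinearMap ∘ₗ LinearMap.inl k N k) ?_,
    σ.asModuleEquiv.symm (0, 1), σ.asModuleEquiv.symm (n, 1), ?_, ?_, fun a => ?_, fun b => ?_⟩
  · exact fun x v => ((hσ x _).trans (congrArg _ (hN x v))).symm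
  · exact σ.asModuleEquiv.symm.injective.comp LinearMap.inl_injective
  · rw [← map_sub, Prod.mk_sub_mk, sub_zero, sub_self]
    rfl
  · rw [hσ, hA]
  · rw [hσ, hB]

end Extension

section Sequence

/-- The map `k[G/C] → k[G/A] ⊕ k[G/B]` sending a coset of `C` to the pair of cosets of `A` and `B`
that contain it, i.e. an edge of the Bass–Serre tree to its endpoints. -/
noncomputable def edgeMap (k : Type) [CommRing k] (h : IsAmalgamatedProduct f g iA iB) :
    PermutationModule k (iA.comp f) →ₗ[MonoidAlgebra k G]
      PermutationModule k iA × PermutationModule k iB :=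
  PermutationModule.lift (.base k iA, .base k iB) fun c =>
    Prod.ext (PermutationModule.single_smul_base (f c))
      ((h.apply_apply_eq c).symm ▸ PermutationModule.single_smul_base (g c))

/-- The map `k[G/A] ⊕ k[G/B] → k`, the difference of the two augmentations. -/
noncomputable def vertexMap (k : Type) [CommRing k] (iA : A →* G) (iB : B →* G) :
    PermutationModule k iA × PermutationModule k iB →ₗ[MonoidAlgebra k G] TrivialModule k G :=
  (PermutationModule.augmentation k iA).coprod (-PermutationModule.augmentation k iB)

theorem edgeMap_base (h : IsAmalgamatedProduct f g iA iB) :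
    h.edgeMap k (.base k (iA.comp f)) = (.base k iA, .base k iB) :=
  PermutationModule.lift_base _ _

theorem vertexMap_surjective : Function.Surjective (vertexMap k iA iB) := fun m => by
  obtain ⟨b, rfl⟩ := TrivialModule.of.surjective m
  refine ⟨(single (1 : G) b • .base k iA, 0), ?_⟩
  rw [vertexMap, LinearMap.coprod_apply, map_zero, add_zero, map_smul,
    PermutationModule.augmentation_base, TrivialModule.single_smul_of, mul_one]

theorem edgeMap_injective (h : IsAmalgamatedProduct f g iA iB) :
    Function.Injective (h.edgeMap k) := by
  obtain ⟨E, _, _, i, eA, eB, hi, hE, hA, hB⟩ :=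
    h.exists_extension (n := PermutationModule.base k (iA.comp f))
      (PermutationModule.single_smul_base (j := iA.comp f))
  let s := (-PermutationModule.lift eA hA).coprod (PermutationModule.lift eB hB)
  have hs : s ∘ₗ h.edgeMap k = i := PermutationModule.hom_ext <| by
    simp [s, edgeMap_base, hE, neg_add_eq_sub]
  exact .of_comp (f := s) (by rwa [← LinearMap.coe_comp, hs])

theorem exact_edgeMap_vertexMap (h : IsAmalgamatedProduct f g iA iB) :
    Function.Exact (h.edgeMap k) (vertexMap k iA iB) := by
  let π := (h.edgeMap k).range.mkQ
  have hπ : π (.base k iA, 0) = -π (0, .base k iB) := by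
    rw [eq_neg_iff_add_eq_zero, ← map_add, Prod.mk_add_mk, add_zero, zero_add, ← h.edgeMap_base]
    exact (Submodule.Quotient.mk_eq_zero _).mpr ⟨_, rfl⟩
  have hfix : ∀ x, (single x 1 : MonoidAlgebra k G) • π (.base k iA, 0) = π (.base k iA, 0) := by
    refine h.induction (fun a => ?_) (fun b => ?_) (fun x y hx hy => ?_) (fun x hx => ?_)
    · rw [← map_smul, Prod.smul_mk, PermutationModule.single_smul_base, smul_zero]
    · rw [hπ, smul_neg, ← map_smul, Prod.smul_mk, PermutationModule.single_smul_base, smul_zero]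
    · rw [← mul_one (1 : k), ← single_mul_single, mul_smul, hy, hx]
    · conv_lhs => rw [← hx]
      rw [← mul_smul, single_mul_single, inv_mul_cancel, one_mul, ← one_def, one_smul]
  let t : TrivialModule k G →ₗ[MonoidAlgebra k G] _ := TrivialModule.lift _ hfix
  have ht : t ∘ₗ vertexMap k iA iB = π := by
    refine LinearMap.prod_ext (PermutationModule.hom_ext ?_) (PermutationModule.hom_ext ?_)
    · simp [t, vertexMap]
    · simp [t, vertexMap, hπ]
  have hcomp : vertexMap k iA iB ∘ₗ h.edgeMap k = 0 := PermutationModule.hom_ext <| by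
    simp [vertexMap, edgeMap_base]
  refine fun v => ⟨fun hv => ?_, ?_⟩
  · have : π v = 0 := by rw [← ht, LinearMap.comp_apply, hv, map_zero]
    exact (Submodule.Quotient.mk_eq_zero _).mp this
  · rintro ⟨w, rfl⟩
    exact LinearMap.congr_fun hcomp w

end Sequence

end IsAmalgamatedProduct

/-- If `G = A *_C B` is an amalgamated free product of groups of type `VFP` along a
type-`VFP` group `C` (with injective edge maps), and `G` itself is of type `VFP`, then
`χ(G) = χ(A) + χ(B) − χ(C)`. -/
theorem eulerChar_amalgam (C A B G : Type) [Group C] [Group A] [Group B] [Group G]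
    (f : C →* A) (g : C →* B) (iA : A →* G) (iB : B →* G)
    (hf : Function.Injective f) (hg : Function.Injective g)
    (hpush : IsAmalgamatedProduct f g iA iB)
    (hA : TypeVFP A) (hB : TypeVFP B) (hC : TypeVFP C) (hG : TypeVFP G)
    (a b c q : ℚ) (ha : EulerCharRel A a) (hb : EulerCharRel B b)
    (hc : EulerCharRel C c) (hq : EulerCharRel G q) :
    q = a + b - c := by
  obtain ⟨hiA, hiB⟩ := hpush.injective hf hg
  obtain ⟨n, ⟨hχA, hχB⟩, hχC, hχG⟩ :=
    ((ha.eventually_hasEulerChar.and hb.eventually_hasEulerChar).and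
      (hc.eventually_hasEulerChar.and hq.eventually_hasEulerChar)).exists
  have hvertices : HasEulerChar (kaplanskyTrace ℚ G) n
      (PermutationModule ℚ iA × PermutationModule ℚ iB) (a + b) :=
    (hχA.permutationModule hiA).prod (hχB.permutationModule hiB)
  have hedges : HasEulerChar (kaplanskyTrace ℚ G) n (PermutationModule ℚ (iA.comp f)) c :=
    hχC.permutationModule (j := iA.comp f) (hiA.comp hf)
  have hsum : a + b = c + q := hvertices.unique kaplanskyTrace_mul_comm <|
    hedges.extension hχG (hpush.edgeMap ℚ) (IsAmalgamatedProduct.vertexMap ℚ iA iB)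
      hpush.edgeMap_injective hpush.exact_edgeMap_vertexMap
      IsAmalgamatedProduct.vertexMap_surjective
  linarith
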